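/- arXiv:1808.09729 — 5 statements merged into one kernel-verified Lean document; each statement's English description precedes it below -/
import Mathlib

section
/- There exist a constant c > 0 and N ∈ ℕ such that for every n ≥ N there is a spatial hypergraph H = (V, {r, b}) with |V| = n, r ∪ b = V and r ∩ b ≠ ∅ with the following properties: H admits a plane support tree, and every plane support tree of H has total length at least c · n · L, where L is the minimum total length over all (not necessarily plane) support trees of H. -/
noncomputable section

/-- Points in the Euclidean plane. -/
abbrev Pt : Type := EuclideanSpace ℝ (Fin 2)

noncomputable instance : DecidableEq Pt := Classical.decEq _

/-- Length of an edge (an unordered pair of points): the Euclidean distance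
between its endpoints. -/
def edgeLen : Sym2 Pt → ℝ := Sym2.lift ⟨fun u v => dist u v, fun u v => dist_comm u v⟩

/-- Total length of a graph given by its finite edge set: the sum of the Euclidean
lengths of its edges. -/
def graphLength (E : Finset (Sym2 Pt)) : ℝ := ∑ e ∈ E, edgeLen e

/-- Closed straight-line segment joining the endpoints of an edge. -/
def edgeSeg : Sym2 Pt → Set Pt :=
  Sym2.lift ⟨fun u v => segment ℝ u v, fun u v => segment_symm ℝ u v⟩

/-- The edges in `E` are unordered pairs of distinct points of `V`. -/
def EdgesOn (V : Finset Pt) (E : Finset (Sym2 Pt)) : Prop :=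
  ∀ e ∈ E, ¬ e.IsDiag ∧ ∀ p ∈ e, p ∈ V

/-- The subgraph induced by `s` of the graph with edge set `E` is connected. -/
def InducedConnected (E : Finset (Sym2 Pt)) (s : Finset Pt) : Prop :=
  ((SimpleGraph.fromEdgeSet (↑E : Set (Sym2 Pt))).induce (↑s : Set Pt)).Connected

/-- The graph with edge set `E` is a tree (connected and acyclic) on vertex set `V`. -/
def IsTreeOn (V : Finset Pt) (E : Finset (Sym2 Pt)) : Prop :=
  ((SimpleGraph.fromEdgeSet (↑E : Set (Sym2 Pt))).induce (↑V : Set Pt)).IsTree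

/-- The straight-line drawing of the graph with edge set `E` is plane: the closed
straight-line segments of any two distinct edges intersect only in points that are
endpoints of both edges. -/
def IsPlane (E : Finset (Sym2 Pt)) : Prop :=
  ∀ e ∈ E, ∀ f ∈ E, e ≠ f → ∀ x ∈ edgeSeg e ∩ edgeSeg f, x ∈ e ∧ x ∈ f

/-- `T` is a Euclidean minimum spanning tree of the point set `P`: a spanning tree of
the complete graph on `P` minimizing the total Euclidean edge length. -/
def IsEMST (P : Finset Pt) (T : Finset (Sym2 Pt)) : Prop :=
  EdgesOn P T ∧ IsTreeOn P T ∧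
    ∀ T' : Finset (Sym2 Pt), EdgesOn P T' → IsTreeOn P T' → graphLength T ≤ graphLength T'

/-- the shared point -/
def pp : Pt := !₂[0, 0]

/-- the points on the line at height one -/
def qq (δ : ℝ) (i : ℕ) : Pt := !₂[(i : ℝ) * δ, 1]

lemma qq_ne_pp (δ : ℝ) (i : ℕ) : qq δ i ≠ pp := by
  intro h
  have := congrArg (fun x : Pt => x 1) h
  simp [qq, pp] at this

lemma qq_inj {δ : ℝ} (hδ : 0 < δ) : Function.Injective (qq δ) := by
  intro i j h
  have := congrArg (fun x : Pt => x 0) h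
  simpa [qq, hδ.ne'] using this

lemma dist_qq_pp_ge (δ : ℝ) (i : ℕ) : 1 ≤ dist (qq δ i) pp := by
  rw [EuclideanSpace.dist_eq]
  apply Real.le_sqrt_of_sq_le
  simp [qq, pp, Fin.sum_univ_two, Real.dist_eq]
  positivity

lemma dist_qq_pp_le (δ : ℝ) (hδ : 0 < δ) (i : ℕ) (h : i * δ ≤ 1) : dist (qq δ i) pp ≤ 2 := by
  rw [EuclideanSpace.dist_eq]
  apply Real.sqrt_le_iff.mpr
  have : 0 ≤ i * δ := by positivity
  simp [qq, pp, Fin.sum_univ_two, Real.dist_eq]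
  nlinarith

lemma dist_qq_qq (δ : ℝ) (i j : ℕ) : dist (qq δ i) (qq δ j) = |i * δ - j * δ| := by
  rw [EuclideanSpace.dist_eq]
  simp [qq, Fin.sum_univ_two, Real.dist_eq, Real.sqrt_sq_eq_abs]

/-- edges given by a parent function -/
def parE (δ : ℝ) (m : ℕ) (f : ℕ → Pt) : Finset (Sym2 Pt) :=
  (Finset.range m).image (fun i => s(qq δ i, f i))

lemma parE_conn {δ : ℝ} {m : ℕ} {f : ℕ → Pt}
    (hf : ∀ i < m, f i = pp ∨ (f i ≠ qq δ i ∧ ∃ j < m, f i = qq δ j ∧ f j = pp))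
    (s : Finset Pt) (hp : pp ∈ s)
    (hs : ∀ x ∈ s, x = pp ∨ ∃ i < m, x = qq δ i ∧ f i ∈ s) :
    InducedConnected (parE δ m f) s := by
  unfold InducedConnected
  set G := (SimpleGraph.fromEdgeSet (↑(parE δ m f) : Set (Sym2 Pt))).induce (↑s : Set Pt) with hG
  have adj : ∀ i < m, f i ≠ qq δ i → ∀ (h1 : qq δ i ∈ s) (h2 : f i ∈ s),
      G.Adj ⟨qq δ i, h1⟩ ⟨f i, h2⟩ := by
    intro i hi hne h1 h2
    simp only [hG, SimpleGraph.comap_adj, Function.Embedding.subtype_apply,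
      SimpleGraph.fromEdgeSet_adj, Finset.mem_coe]
    exact ⟨Finset.mem_image.mpr ⟨i, Finset.mem_range.mpr hi, rfl⟩, hne.symm⟩
  have reach1 : ∀ i < m, f i = pp → ∀ (h1 : qq δ i ∈ s), G.Reachable ⟨qq δ i, h1⟩ ⟨pp, hp⟩ := by
    intro i hi hfi h1
    have := adj i hi (by rw [hfi]; exact (qq_ne_pp δ i).symm) h1 (by rw [hfi]; exact hp)
    have h := this.reachable
    simpa only [hfi] using h
  have reach : ∀ x : (↑s : Set Pt), G.Reachable x ⟨pp, hp⟩ := by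
    rintro ⟨x, hx⟩
    rcases hs x hx with rfl | ⟨i, hi, rfl, hfs⟩
    · exact SimpleGraph.Reachable.refl _
    · rcases hf i hi with h | ⟨hne, j, hj, h, h'⟩
      · exact reach1 i hi h hx
      · have h1 := (adj i hi hne hx hfs).reachable
        have h2 := reach1 j hj h' (h ▸ hfs)
        refine h1.trans ?_
        simpa only [h] using h2
  have : Nonempty (↑s : Set Pt) := ⟨⟨pp, hp⟩⟩
  exact ⟨fun x y => (reach x).trans (reach y).symm⟩

lemma isTreeOn_of_conn (V : Finset Pt) (E : Finset (Sym2 Pt)) (hc : InducedConnected E V)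
    (hcard : E.card + 1 ≤ V.card) : IsTreeOn V E := by
  unfold IsTreeOn
  unfold InducedConnected at hc
  set G := (SimpleGraph.fromEdgeSet (↑E : Set (Sym2 Pt))).induce (↑V : Set Pt) with hG
  rw [SimpleGraph.isTree_iff_connected_and_card]
  refine ⟨hc, le_antisymm ?_ ?_⟩
  · have h1 : Nat.card G.edgeSet ≤ Nat.card (↑E : Set (Sym2 Pt)) := by
      apply Nat.card_le_card_of_injective
        (fun e : G.edgeSet => (⟨Sym2.map Subtype.val e.1, by
          obtain ⟨e, he⟩ := e
          induction e with
          | _ a b =>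
            simp only [hG, SimpleGraph.mem_edgeSet, SimpleGraph.comap_adj,
              SimpleGraph.fromEdgeSet_adj] at he
            exact he.1⟩ : (↑E : Set (Sym2 Pt))))
      intro a b hab
      apply Subtype.ext
      exact Sym2.map.injective Subtype.val_injective (congrArg Subtype.val hab)
    have h2 : Nat.card (↑E : Set (Sym2 Pt)) = E.card := by simp
    have h3 : Nat.card (↑V : Set Pt) = V.card := by simp
    omega
  · exact hc.card_vert_le_card_edgeSet_add_one

lemma exists_adj_of_conn {E : Finset (Sym2 Pt)} {s : Finset Pt} (hc : InducedConnected E s)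
    {x y : Pt} (hx : x ∈ s) (hy : y ∈ s) (hxy : x ≠ y) :
    ∃ z ∈ s, s(x, z) ∈ E ∧ x ≠ z := by
  have h := hc.preconnected ⟨x, hx⟩ ⟨y, hy⟩
  obtain ⟨w⟩ := h
  cases w with
  | nil => exact absurd rfl hxy
  | cons h w =>
    rename_i z
    simp only [SimpleGraph.comap_adj, SimpleGraph.fromEdgeSet_adj] at h
    exact ⟨z.1, z.2, h.1, h.2⟩

lemma mem_seg (δ : ℝ) {i k j : ℕ} (h1 : i < k) (h2 : k < j) :
    qq δ k ∈ segment ℝ (qq δ i) (qq δ j) := by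
  have hij : (0 : ℝ) < j - i := by
    have : i < j := h1.trans h2
    have : (i : ℝ) < j := by exact_mod_cast this
    linarith
  have h1' : (i : ℝ) < k := by exact_mod_cast h1
  have h2' : (k : ℝ) < j := by exact_mod_cast h2
  refine ⟨(j - k) / (j - i), (k - i) / (j - i), div_nonneg (by linarith) hij.le,
    div_nonneg (by linarith) hij.le, by field_simp; ring, ?_⟩
  ext t
  fin_cases t
  · simp [qq]; field_simp; ring
  · simp [qq]; field_simp; ring

/-- In a plane support tree every line point is joined to the shared point. -/
lemma forced {δ : ℝ} (hδ : 0 < δ) {m : ℕ} {T : Finset (Sym2 Pt)} {V : Finset Pt}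
    (hV : V = insert pp ((Finset.range m).image (qq δ)))
    (hT : IsTreeOn V T) (hP : IsPlane T) (a : ℕ) (s : Finset Pt)
    (hs : s = insert pp (((Finset.range m).filter (fun i => i % 2 = a)).image (qq δ)))
    (hc : InducedConnected T s) (i : ℕ) (hi : i < m) (hia : i % 2 = a) :
    s(qq δ i, pp) ∈ T := by
  have hcV : InducedConnected T V := hT.1
  have key : ∀ i j k, k < m → i < k → k < j → s(qq δ i, qq δ j) ∈ T → False := by
    intro i j k hk h1 h2 hmem
    obtain ⟨z, -, hz, -⟩ := exists_adj_of_conn hcV (x := qq δ k) (y := pp)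
      (by rw [hV]; exact Finset.mem_insert_of_mem
            (Finset.mem_image_of_mem _ (Finset.mem_range.mpr hk)))
      (by rw [hV]; exact Finset.mem_insert_self _ _) (qq_ne_pp δ k)
    have hnot : qq δ k ∉ s(qq δ i, qq δ j) := by
      rw [Sym2.mem_iff]
      rintro (h | h)
      · have := qq_inj hδ h; omega
      · have := qq_inj hδ h; omega
    refine hnot (hP _ hmem _ hz ?_ (qq δ k) ⟨mem_seg δ h1 h2, left_mem_segment ℝ _ _⟩).1
    intro h
    apply hnot
    rw [h]
    exact Sym2.mem_mk_left _ _
  obtain ⟨z, hz, hmem, hne⟩ := exists_adj_of_conn hc (x := qq δ i) (y := pp)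
    (by rw [hs]; exact Finset.mem_insert_of_mem (Finset.mem_image_of_mem _
          (Finset.mem_filter.mpr ⟨Finset.mem_range.mpr hi, hia⟩)))
    (by rw [hs]; exact Finset.mem_insert_self _ _) (qq_ne_pp δ i)
  rw [hs, Finset.mem_insert] at hz
  rcases hz with rfl | hz
  · exact hmem
  · obtain ⟨j, hj, rfl⟩ := Finset.mem_image.mp hz
    rw [Finset.mem_filter, Finset.mem_range] at hj
    have hij : i ≠ j := fun h => hne (by rw [h])
    exfalso
    rcases lt_or_gt_of_ne hij with h | h
    · exact key i j (i + 1) (by omega) (by omega) (by omega) hmem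
    · exact key j i (j + 1) (by omega) (by omega) (by omega) (by rwa [Sym2.eq_swap])

lemma edgeLen_nonneg (e : Sym2 Pt) : 0 ≤ edgeLen e := by
  induction e with
  | _ a b => exact (dist_nonneg : 0 ≤ dist a b)

/-- The star is plane. -/
lemma star_plane {δ : ℝ} (hδ : 0 < δ) (m : ℕ) : IsPlane (parE δ m (fun _ => pp)) := by
  intro e he f hf hne x hx
  obtain ⟨i, -, rfl⟩ := Finset.mem_image.mp he
  obtain ⟨j, -, rfl⟩ := Finset.mem_image.mp hf
  have hij : (i : ℝ) ≠ j := fun h => hne (by rw [Nat.cast_injective h])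
  obtain ⟨⟨a, b, -, -, -, h1⟩, ⟨c, d, -, -, -, h2⟩⟩ := hx
  have hx0 := congrArg (fun x : Pt => x 0) h1
  have hx1 := congrArg (fun x : Pt => x 1) h1
  have hy0 := congrArg (fun x : Pt => x 0) h2
  have hy1 := congrArg (fun x : Pt => x 1) h2
  simp [qq, pp] at hx0 hx1 hy0 hy1
  have hac : a = c := by rw [hx1, hy1]
  subst hac
  have ha : a = 0 := by
    have h : a * ((i - j) * δ) = 0 := by linarith
    rcases mul_eq_zero.mp h with h | h
    · exact h
    · rcases mul_eq_zero.mp h with h | h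
      · exact absurd (sub_eq_zero.mp h) hij
      · exact absurd h hδ.ne'
  have hxp : x = pp := by
    ext t
    fin_cases t
    · simp [pp, ← hx0, ha]
    · simp [pp, ← hx1, ha]
  rw [hxp]
  exact ⟨Sym2.mem_mk_right _ _, Sym2.mem_mk_right _ _⟩

/-- Parent-function graphs are support trees. -/
lemma parE_support {δ : ℝ} (hδ : 0 < δ) {m : ℕ} {f : ℕ → Pt} {V r b : Finset Pt}
    (hV : V = insert pp ((Finset.range m).image (qq δ)))
    (hr : r = insert pp (((Finset.range m).filter (fun i => i % 2 = 0)).image (qq δ)))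
    (hb : b = insert pp (((Finset.range m).filter (fun i => i % 2 = 1)).image (qq δ)))
    (hf : ∀ i < m, f i = pp ∨
      (f i ≠ qq δ i ∧ ∃ j < m, f i = qq δ j ∧ f j = pp ∧ j % 2 = i % 2)) :
    EdgesOn V (parE δ m f) ∧ IsTreeOn V (parE δ m f) ∧
      InducedConnected (parE δ m f) r ∧ InducedConnected (parE δ m f) b := by
  have hf' : ∀ i < m, f i = pp ∨ (f i ≠ qq δ i ∧ ∃ j < m, f i = qq δ j ∧ f j = pp) := by
    intro i hi
    rcases hf i hi with h | ⟨h, j, hj, h1, h2, -⟩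
    · exact Or.inl h
    · exact Or.inr ⟨h, j, hj, h1, h2⟩
  have hfV : ∀ i < m, f i ∈ V := by
    intro i hi
    rw [hV]
    rcases hf i hi with h | ⟨h, j, hj, h1, h2, -⟩
    · rw [h]; exact Finset.mem_insert_self _ _
    · rw [h1]
      exact Finset.mem_insert_of_mem (Finset.mem_image_of_mem _ (Finset.mem_range.mpr hj))
  have hsub : ∀ a, ∀ s : Finset Pt,
      s = insert pp (((Finset.range m).filter (fun i => i % 2 = a)).image (qq δ)) →
      InducedConnected (parE δ m f) s := by
    intro a s hs
    apply parE_conn hf' s (by rw [hs]; exact Finset.mem_insert_self _ _)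
    intro x hx
    rw [hs, Finset.mem_insert] at hx
    rcases hx with rfl | hx
    · exact Or.inl rfl
    · obtain ⟨i, hi, rfl⟩ := Finset.mem_image.mp hx
      rw [Finset.mem_filter, Finset.mem_range] at hi
      refine Or.inr ⟨i, hi.1, rfl, ?_⟩
      rw [hs]
      rcases hf i hi.1 with h | ⟨h, j, hj, h1, h2, h3⟩
      · rw [h]; exact Finset.mem_insert_self _ _
      · rw [h1]
        exact Finset.mem_insert_of_mem (Finset.mem_image_of_mem _
          (Finset.mem_filter.mpr ⟨Finset.mem_range.mpr hj, by omega⟩))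
  refine ⟨?_, ?_, hsub 0 r hr, hsub 1 b hb⟩
  · intro e he
    obtain ⟨i, hi, rfl⟩ := Finset.mem_image.mp he
    rw [Finset.mem_range] at hi
    constructor
    · rw [Sym2.mk_isDiag_iff]
      intro h
      rcases hf i hi with h' | ⟨h', -⟩
      · rw [h'] at h; exact qq_ne_pp δ i h
      · exact h' h.symm
    · intro x hx
      rcases Sym2.mem_iff.mp hx with rfl | rfl
      · rw [hV]
        exact Finset.mem_insert_of_mem (Finset.mem_image_of_mem _ (Finset.mem_range.mpr hi))
      · exact hfV i hi
  · apply isTreeOn_of_conn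
    · apply parE_conn hf' V (by rw [hV]; exact Finset.mem_insert_self _ _)
      intro x hx
      rw [hV, Finset.mem_insert] at hx
      rcases hx with rfl | hx
      · exact Or.inl rfl
      · obtain ⟨i, hi, rfl⟩ := Finset.mem_image.mp hx
        rw [Finset.mem_range] at hi
        exact Or.inr ⟨i, hi, rfl, hfV i hi⟩
    · have h1 : (parE δ m f).card ≤ m := by
        simpa [parE] using Finset.card_image_le (s := Finset.range m)
          (f := fun i => s(qq δ i, f i))
      have h2 : V.card = m + 1 := by
        rw [hV, Finset.card_insert_of_notMem, Finset.card_image_of_injective _ (qq_inj hδ),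
          Finset.card_range]
        intro h
        obtain ⟨i, -, h⟩ := Finset.mem_image.mp h
        exact qq_ne_pp δ i h
      omega

/-- parent function of the short support -/
def shortPar (δ : ℝ) (i : ℕ) : Pt := if i < 2 then pp else qq δ (i % 2)

lemma short_len (m : ℕ) (δ : ℝ) (hδ : δ = 1 / ((m : ℝ) + 1) ^ 2) :
    graphLength (parE δ m (shortPar δ)) ≤ 5 := by
  have hm : (0 : ℝ) < (m : ℝ) + 1 := by positivity
  have hδ0 : 0 < δ := by rw [hδ]; positivity
  have hmδ : (m : ℝ) * δ ≤ 1 / ((m : ℝ) + 1) := by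
    rw [hδ, mul_one_div, div_le_div_iff₀ (by positivity) hm]
    nlinarith
  have h1m : 1 / ((m : ℝ) + 1) ≤ 1 := by
    rw [div_le_one hm]
    have : (0 : ℝ) ≤ m := Nat.cast_nonneg _
    linarith
  have hb : ∀ i < m, (i : ℝ) * δ ≤ 1 / ((m : ℝ) + 1) := by
    intro i hi
    refine le_trans ?_ hmδ
    have : (i : ℝ) ≤ m := by exact_mod_cast hi.le
    gcongr
  have hle : graphLength (parE δ m (shortPar δ)) ≤
      ∑ i ∈ Finset.range m, edgeLen s(qq δ i, shortPar δ i) := by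
    unfold graphLength parE
    exact Finset.sum_image_le_of_nonneg (fun i _ => edgeLen_nonneg i)
  refine hle.trans ?_
  have hle2 : ∑ i ∈ Finset.range m, edgeLen s(qq δ i, shortPar δ i) ≤
      ∑ i ∈ Finset.range m, ((if i < 2 then (2 : ℝ) else 0) + 1 / ((m : ℝ) + 1)) := by
    apply Finset.sum_le_sum
    intro i hi
    rw [Finset.mem_range] at hi
    have hbi := hb i hi
    show dist (qq δ i) (shortPar δ i) ≤ _
    unfold shortPar
    split_ifs with h
    · have := dist_qq_pp_le δ hδ0 i (hbi.trans h1m)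
      have : 0 < 1 / ((m : ℝ) + 1) := by positivity
      linarith
    · rw [dist_qq_qq]
      have hc : ((i % 2 : ℕ) : ℝ) * δ ≤ i * δ := by
        have : ((i % 2 : ℕ) : ℝ) ≤ i := by exact_mod_cast Nat.mod_le i 2
        gcongr
      have hc0 : 0 ≤ ((i % 2 : ℕ) : ℝ) * δ := by positivity
      rw [abs_of_nonneg (by linarith)]
      linarith
  refine hle2.trans ?_
  rw [Finset.sum_add_distrib]
  have h4 : ∑ i ∈ Finset.range m, (if i < 2 then (2 : ℝ) else 0) ≤ 4 := by
    rw [← Finset.sum_filter, Finset.sum_const, nsmul_eq_mul]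
    have : ((Finset.range m).filter (fun i => i < 2)).card ≤ 2 := by
      calc _ ≤ (Finset.range 2).card := Finset.card_le_card (by
            intro i hi
            simp only [Finset.mem_filter] at hi
            exact Finset.mem_range.mpr hi.2)
        _ = 2 := by simp
    have : (((Finset.range m).filter (fun i => i < 2)).card : ℝ) ≤ 2 := by exact_mod_cast this
    linarith
  have h5 : ∑ i ∈ Finset.range m, 1 / ((m : ℝ) + 1) ≤ 1 := by
    rw [Finset.sum_const, nsmul_eq_mul, Finset.card_range, mul_one_div, div_le_one hm]
    linarith
  linarith

/-- There are `c > 0` and `N` such that for every `n ≥ N` there is a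
spatial hypergraph `(V, {r, b})` with `|V| = n`, `r ∪ b = V` and `r ∩ b ≠ ∅` that admits
a plane support tree, and such that every plane support tree has length at least
`c * n * graphLength T₀`, where `T₀` is a minimum-length (not necessarily plane)
support tree. -/
theorem plane_support_tree_not_constant_approx :
    ∃ c : ℝ, 0 < c ∧ ∃ N : ℕ, ∀ n : ℕ, N ≤ n →
      ∃ (V r b : Finset Pt), V.card = n ∧ r ∪ b = V ∧ (r ∩ b).Nonempty ∧
        -- `H` admits a plane support tree:
        (∃ E : Finset (Sym2 Pt), EdgesOn V E ∧ IsTreeOn V E ∧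
          InducedConnected E r ∧ InducedConnected E b ∧ IsPlane E) ∧
        ∃ T₀ : Finset (Sym2 Pt),
          -- `T₀` is a (not necessarily plane) support tree ...
          (EdgesOn V T₀ ∧ IsTreeOn V T₀ ∧ InducedConnected T₀ r ∧ InducedConnected T₀ b) ∧
          -- ... of minimum total length among all support trees, and
          (∀ T : Finset (Sym2 Pt), EdgesOn V T → IsTreeOn V T →
            InducedConnected T r → InducedConnected T b →
            graphLength T₀ ≤ graphLength T) ∧
          -- every plane support tree is long:
          (∀ T : Finset (Sym2 Pt), EdgesOn V T → IsTreeOn V T →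
            InducedConnected T r → InducedConnected T b → IsPlane T →
            c * (n : ℝ) * graphLength T₀ ≤ graphLength T) := by
  refine ⟨1 / 10, by norm_num, 2, ?_⟩
  intro n hn
  obtain ⟨m, rfl⟩ : ∃ m, n = m + 1 := ⟨n - 1, by omega⟩
  obtain ⟨δ, hδ⟩ : ∃ δ : ℝ, δ = 1 / ((m : ℝ) + 1) ^ 2 := ⟨_, rfl⟩
  have hδ0 : 0 < δ := by rw [hδ]; positivity
  obtain ⟨V, hV⟩ : ∃ V, V = insert pp ((Finset.range m).image (qq δ)) := ⟨_, rfl⟩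
  obtain ⟨r, hr⟩ : ∃ r, r = insert pp
    (((Finset.range m).filter (fun i => i % 2 = 0)).image (qq δ)) := ⟨_, rfl⟩
  obtain ⟨b, hb⟩ : ∃ b, b = insert pp
    (((Finset.range m).filter (fun i => i % 2 = 1)).image (qq δ)) := ⟨_, rfl⟩
  have hstar := parE_support (f := fun _ => pp) hδ0 hV hr hb (fun i _ => Or.inl rfl)
  have hshort := parE_support (f := shortPar δ) hδ0 hV hr hb (by
    intro i hi
    by_cases h : i < 2
    · left; simp [shortPar, h]
    · right
      refine ⟨?_, i % 2, by omega, by simp [shortPar, h], ?_, by omega⟩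
      · simp only [shortPar, h, if_false]
        intro h'
        have := qq_inj hδ0 h'
        omega
      · have : i % 2 < 2 := Nat.mod_lt _ (by norm_num)
        simp [shortPar, this])
  refine ⟨V, r, b, ?_, ?_, ?_, ⟨_, hstar.1, hstar.2.1, hstar.2.2.1, hstar.2.2.2,
    star_plane hδ0 m⟩, ?_⟩
  · rw [hV, Finset.card_insert_of_notMem, Finset.card_image_of_injective _ (qq_inj hδ0),
      Finset.card_range]
    intro h
    obtain ⟨i, -, h⟩ := Finset.mem_image.mp h
    exact qq_ne_pp δ i h
  · rw [hV, hr, hb]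
    ext x
    simp only [Finset.mem_union, Finset.mem_insert, Finset.mem_image, Finset.mem_filter,
      Finset.mem_range]
    constructor
    · rintro ((h | ⟨i, hi, h⟩) | (h | ⟨i, hi, h⟩))
      · exact Or.inl h
      · exact Or.inr ⟨i, hi.1, h⟩
      · exact Or.inl h
      · exact Or.inr ⟨i, hi.1, h⟩
    · rintro (h | ⟨i, hi, h⟩)
      · exact Or.inl (Or.inl h)
      · rcases Nat.mod_two_eq_zero_or_one i with h' | h'
        · exact Or.inl (Or.inr ⟨i, ⟨hi, h'⟩, h⟩)
        · exact Or.inr (Or.inr ⟨i, ⟨hi, h'⟩, h⟩)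
  · exact ⟨pp, by rw [hr, hb]; simp⟩
  · classical
    have hne : ((V.sym2.powerset).filter (fun E => EdgesOn V E ∧ IsTreeOn V E ∧
        InducedConnected E r ∧ InducedConnected E b)).Nonempty := by
      refine ⟨_, Finset.mem_filter.mpr ⟨Finset.mem_powerset.mpr ?_, hshort⟩⟩
      intro e he
      exact Finset.mem_sym2_iff.mpr (hshort.1 e he).2
    obtain ⟨T₀, hT₀, hmin⟩ := Finset.exists_min_image _ graphLength hne
    have hmin' : ∀ T : Finset (Sym2 Pt), EdgesOn V T → IsTreeOn V T →
            InducedConnected T r → InducedConnected T b →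
            graphLength T₀ ≤ graphLength T := by
      intro T h1 h2 h3 h4
      apply hmin
      refine Finset.mem_filter.mpr ⟨Finset.mem_powerset.mpr ?_, h1, h2, h3, h4⟩
      intro e he
      exact Finset.mem_sym2_iff.mpr (h1 e he).2
    refine ⟨T₀, (Finset.mem_filter.mp hT₀).2, hmin', ?_⟩
    intro T h1 h2 h3 h4 h5
    have hT5 : graphLength T₀ ≤ 5 :=
      (hmin' _ hshort.1 hshort.2.1 hshort.2.2.1 hshort.2.2.2).trans (short_len m δ hδ)
    have hsub : parE δ m (fun _ => pp) ⊆ T := by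
      intro e he
      obtain ⟨i, hi, rfl⟩ := Finset.mem_image.mp he
      rw [Finset.mem_range] at hi
      rcases Nat.mod_two_eq_zero_or_one i with h' | h'
      · exact forced hδ0 hV h2 h5 0 r hr h3 i hi h'
      · exact forced hδ0 hV h2 h5 1 b hb h4 i hi h'
    have hlow : (m : ℝ) ≤ graphLength T := by
      calc (m : ℝ) = ∑ i ∈ Finset.range m, (1 : ℝ) := by simp
        _ ≤ ∑ i ∈ Finset.range m, edgeLen s(qq δ i, pp) :=
            Finset.sum_le_sum (fun i _ => dist_qq_pp_ge δ i)
        _ = graphLength (parE δ m (fun _ => pp)) := by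
            unfold graphLength parE
            rw [Finset.sum_image]
            intro i _ j _ h
            exact qq_inj hδ0 (Sym2.congr_left.mp h)
        _ ≤ graphLength T :=
            Finset.sum_le_sum_of_subset_of_nonneg hsub (fun e _ _ => edgeLen_nonneg e)
    have hm1 : (1 : ℝ) ≤ m := by
      have : 1 ≤ m := by omega
      exact_mod_cast this
    have hx : 1 / 10 * ((m + 1 : ℕ) : ℝ) * graphLength T₀ ≤ 1 / 10 * ((m + 1 : ℕ) : ℝ) * 5 := by
      gcongr
    push_cast at hx ⊢
    linarith
end
end

section
/- Let P be a finite set of points in the Euclidean plane such that all pairwise distances between distinct points of P are distinct (so the Euclidean minimum spanning tree T' of P is unique), and let F be a set of unordered pairs of distinct points of P. Let T be any spanning tree of the complete graph on P that minimizes the total F-weight, where the F-weight of a pair {u,v} is 0 if {u,v} ∈ F and the Euclidean distance between u and v otherwise. Then every edge of T belongs to F or is an edge of T'. -/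
noncomputable section

/-- Total `F`-weight of edge set `E`: edges in `F` have weight `0`, all other edges
their Euclidean length. -/
def fWeight (F E : Finset (Sym2 Pt)) : ℝ := ∑ e ∈ E, if e ∈ F then 0 else edgeLen e

/-- `T` is an `F`-minimum spanning tree of `P`: a spanning tree of the complete graph
on `P` minimizing the total `F`-weight. -/
def IsFMST (F : Finset (Sym2 Pt)) (P : Finset Pt) (T : Finset (Sym2 Pt)) : Prop :=
  EdgesOn P T ∧ IsTreeOn P T ∧
    ∀ T' : Finset (Sym2 Pt), EdgesOn P T' → IsTreeOn P T' → fWeight F T ≤ fWeight F T'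

/-- All pairwise distances between distinct points of `P` are distinct: two pairs of
distinct points of `P` at equal distance must be the same unordered pair. -/
def DistinctDistances (P : Finset Pt) : Prop :=
  ∀ p ∈ P, ∀ q ∈ P, ∀ u ∈ P, ∀ v ∈ P, p ≠ q → u ≠ v →
    dist p q = dist u v → s(p, q) = s(u, v)

theorem exch_tree {V : Type*} (G : SimpleGraph V) (hG : G.IsTree) (u v x y : V)
    (hxy : ¬ (G.deleteEdges {s(u, v)}).Reachable x y) :
    (G.deleteEdges {s(u, v)} ⊔ SimpleGraph.edge x y).IsTree := by
  have key : ∀ a b : V, (G.deleteEdges {s(u, v)}).Reachable a b ∨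
      ((G.deleteEdges {s(u, v)}).Reachable a u ∧ (G.deleteEdges {s(u, v)}).Reachable v b) ∨
      ((G.deleteEdges {s(u, v)}).Reachable a v ∧ (G.deleteEdges {s(u, v)}).Reachable u b) := by
    intro a b
    obtain ⟨p⟩ := hG.connected.preconnected a b
    induction p with
    | nil => exact Or.inl (SimpleGraph.Reachable.refl _)
    | @cons a c b h p ih =>
      by_cases hac : s(a, c) = s(u, v)
      · rw [Sym2.eq_iff] at hac
        rcases hac with ⟨rfl, rfl⟩ | ⟨rfl, rfl⟩
        · rcases ih with h1 | ⟨h1, h2⟩ | ⟨h1, h2⟩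
          · exact Or.inr (Or.inl ⟨SimpleGraph.Reachable.refl _, h1⟩)
          · exact Or.inl (h1.symm.trans h2)
          · exact Or.inl h2
        · rcases ih with h1 | ⟨h1, h2⟩ | ⟨h1, h2⟩
          · exact Or.inr (Or.inr ⟨SimpleGraph.Reachable.refl _, h1⟩)
          · exact Or.inl h2
          · exact Or.inl (h1.symm.trans h2)
      · have hr : (G.deleteEdges {s(u, v)}).Reachable a c := by
          apply SimpleGraph.Adj.reachable
          rw [SimpleGraph.deleteEdges_adj]
          exact ⟨h, hac⟩
        rcases ih with h1 | ⟨h1, h2⟩ | ⟨h1, h2⟩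
        · exact Or.inl (hr.trans h1)
        · exact Or.inr (Or.inl ⟨hr.trans h1, h2⟩)
        · exact Or.inr (Or.inr ⟨hr.trans h1, h2⟩)
  have hne : x ≠ y := by
    rintro rfl
    exact hxy (SimpleGraph.Reachable.refl _)
  have hadj : (G.deleteEdges {s(u, v)} ⊔ SimpleGraph.edge x y).Reachable x y := by
    apply SimpleGraph.Adj.reachable
    simp [SimpleGraph.edge_adj, hne]
  have hle : ∀ {a b : V}, (G.deleteEdges {s(u, v)}).Reachable a b →
      (G.deleteEdges {s(u, v)} ⊔ SimpleGraph.edge x y).Reachable a b :=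
    fun h => h.mono le_sup_left
  have huv : (G.deleteEdges {s(u, v)} ⊔ SimpleGraph.edge x y).Reachable u v := by
    rcases key x y with h | ⟨h1, h2⟩ | ⟨h1, h2⟩
    · exact absurd h hxy
    · exact ((hle h1).symm.trans hadj).trans (hle h2).symm
    · exact (((hle h1).symm.trans hadj).trans (hle h2).symm).symm
  have : Nonempty V := ⟨x⟩
  refine ⟨⟨fun a b => ?_⟩, ?_⟩
  · rcases key a b with h | ⟨h1, h2⟩ | ⟨h1, h2⟩
    · exact hle h
    · exact ((hle h1).trans huv).trans (hle h2)
    · exact ((hle h1).trans huv.symm).trans (hle h2)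
  · exact SimpleGraph.IsAcyclic.sup_edge_of_not_reachable hxy
      (hG.isAcyclic.anti (SimpleGraph.deleteEdges_le _))

theorem exch_pair {V : Type*} (G G' : SimpleGraph V) (hG : G.IsTree) (hG' : G'.IsTree) (u v : V)
    (h : G.Adj u v) (h' : ¬ G'.Adj u v) : ∃ x y : V, G'.Adj x y ∧ ¬ G.Adj x y ∧
      (G.deleteEdges {s(u, v)} ⊔ SimpleGraph.edge x y).IsTree ∧
      (G'.deleteEdges {s(x, y)} ⊔ SimpleGraph.edge u v).IsTree := by
  classical
  have hb : ¬ (G.deleteEdges {s(u, v)}).Reachable u v :=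
    SimpleGraph.isBridge_iff.1 (SimpleGraph.isAcyclic_iff_forall_adj_isBridge.1 hG.isAcyclic h)
  obtain ⟨p, hp, hu⟩ := hG'.existsUnique_path u v
  obtain ⟨d, hd, hd1, hd2⟩ := p.exists_boundary_dart
    {w | (G.deleteEdges {s(u, v)}).Reachable u w} (SimpleGraph.Reachable.refl _) hb
  have hxy : ¬ (G.deleteEdges {s(u, v)}).Reachable d.fst d.snd := fun hr => hd2 (hd1.trans hr)
  refine ⟨d.fst, d.snd, d.adj, fun hA => ?_, exch_tree G hG u v _ _ hxy,
    exch_tree G' hG' _ _ u v fun hr => ?_⟩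
  · apply hxy
    apply SimpleGraph.Adj.reachable
    rw [SimpleGraph.deleteEdges_adj]
    refine ⟨hA, fun he => h' ?_⟩
    have h3 := d.adj
    rw [← SimpleGraph.mem_edgeSet] at h3 ⊢
    rw [Set.mem_singleton_iff] at he
    rwa [← he]
  · obtain ⟨q, hq⟩ := SimpleGraph.reachable_deleteEdges_iff_exists_walk.1 hr
    have h4 := hu q.bypass q.bypass_isPath
    apply hq
    apply q.edges_bypass_subset_edges
    rw [h4]
    exact SimpleGraph.Walk.edges_eq_map_darts p ▸ List.mem_map_of_mem hd

theorem isTreeOn_exch (P : Finset Pt) (T : Finset (Sym2 Pt)) (u v x y : P)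
    (h : (((SimpleGraph.fromEdgeSet (↑T : Set (Sym2 Pt))).induce (↑P : Set Pt)).deleteEdges
      {s(u, v)} ⊔ SimpleGraph.edge x y).IsTree) :
    IsTreeOn P (insert s(x.1, y.1) (T.erase s(u.1, v.1))) := by
  unfold IsTreeOn
  convert h using 1
  ext a b
  simp only [SimpleGraph.comap_adj, SimpleGraph.fromEdgeSet_adj, SimpleGraph.sup_adj,
    SimpleGraph.deleteEdges_adj, SimpleGraph.edge_adj, Finset.coe_insert, Finset.coe_erase,
    Set.mem_insert_iff, Set.mem_sdiff, Set.mem_singleton_iff, Sym2.eq_iff,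
    Function.Embedding.subtype_apply, ne_eq, Subtype.ext_iff, Finset.mem_coe]
  tauto

theorem edgesOn_exch (P : Finset Pt) (T : Finset (Sym2 Pt)) (e : Sym2 Pt) (x y : P) (hne : x ≠ y)
    (hT : EdgesOn P T) : EdgesOn P (insert s(x.1, y.1) (T.erase e)) := by
  intro f hf
  rcases Finset.mem_insert.1 hf with rfl | hf
  · refine ⟨?_, ?_⟩
    · exact fun h => hne (Subtype.ext (Sym2.mk_isDiag_iff.1 h))
    · intro p hp
      rcases Sym2.mem_iff.1 hp with rfl | rfl
      · exact x.2
      · exact y.2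
  · exact hT f (Finset.mem_of_mem_erase hf)

theorem sum_exch (w : Sym2 Pt → ℝ) (T : Finset (Sym2 Pt)) (e f : Sym2 Pt) (he : e ∈ T)
    (hf : f ∉ T) : ∑ g ∈ insert f (T.erase e), w g = w f + (∑ g ∈ T, w g - w e) := by
  rw [Finset.sum_insert (fun h => hf (Finset.mem_of_mem_erase h)), Finset.sum_erase_eq_sub he]

/-- If all pairwise distances of `P` are distinct, `F` is a set of
unordered pairs of distinct points of `P`, `T` is an `F`-minimum spanning tree of `P`,
and `T'` is the (unique) Euclidean minimum spanning tree of `P`, then every edge of `T`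
belongs to `F` or to `T'`. -/
theorem fmst_subset_F_union_emst (P : Finset Pt) (hdist : DistinctDistances P)
    (F : Finset (Sym2 Pt)) (hF : ∀ e ∈ F, ¬ e.IsDiag ∧ ∀ p ∈ e, p ∈ P)
    (T : Finset (Sym2 Pt)) (hT : IsFMST F P T)
    (T' : Finset (Sym2 Pt)) (hT' : IsEMST P T') :
    ∀ e ∈ T, e ∈ F ∨ e ∈ T' := by
  intro e he
  by_contra! hcon
  obtain ⟨heF, heT'⟩ := hcon
  obtain ⟨hTe, hTt, hTm⟩ := hT
  obtain ⟨hTe', hTt', hTm'⟩ := hT'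
  obtain ⟨hdiag, hmem⟩ := hTe e he
  induction e using Sym2.ind with
  | _ u v =>
  have hu := hmem u (Sym2.mem_mk_left u v)
  have hv := hmem v (Sym2.mem_mk_right u v)
  have huv : u ≠ v := by simpa using hdiag
  obtain ⟨x, y, h1, h2, h3, h4⟩ := exch_pair _ _ hTt hTt' ⟨u, hu⟩ ⟨v, hv⟩
    (by simp [he, huv]) (by simp [heT'])
  have hxy : x ≠ y := h1.ne
  have hxy1 : x.1 ≠ y.1 := fun h => hxy (Subtype.ext h)
  have hf' : s(x.1, y.1) ∈ T' := by
    have := h1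
    simp at this
    exact this.1
  have hf : s(x.1, y.1) ∉ T := fun hh => h2 (by simp [hh, hxy1])
  have t1 := hTm _ (edgesOn_exch P T s(u, v) x y hxy hTe)
    (isTreeOn_exch P T ⟨u, hu⟩ ⟨v, hv⟩ x y h3)
  have t2 := hTm' _ (edgesOn_exch P T' s(x.1, y.1) ⟨u, hu⟩ ⟨v, hv⟩ (by simpa using huv) hTe')
    (isTreeOn_exch P T' x y ⟨u, hu⟩ ⟨v, hv⟩ h4)
  unfold fWeight at t1
  unfold graphLength at t2
  rw [sum_exch _ _ _ _ he hf] at t1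
  rw [sum_exch _ _ _ _ hf' heT'] at t2
  rw [if_neg heF] at t1
  have e1 : edgeLen s(u, v) = dist u v := rfl
  have e2 : edgeLen s(x.1, y.1) = dist x.1 y.1 := rfl
  have hnn : 0 ≤ dist x.1 y.1 := dist_nonneg
  have hle : (if s(x.1, y.1) ∈ F then (0 : ℝ) else edgeLen s(x.1, y.1)) ≤ dist x.1 y.1 := by
    split_ifs
    · exact hnn
    · exact e2.le
  have heq : dist u v = dist x.1 y.1 := by
    apply le_antisymm <;> linarith
  have := hdist u hu v hv x.1 x.2 y.1 y.2 huv hxy1 heq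
  exact hf (this ▸ he)
end
end

section
/- Let P be a finite set of points in the Euclidean plane such that all pairwise distances between distinct points of P are distinct, and let r, b ⊆ P with r ∪ b = P. Let T1 be the Euclidean minimum spanning tree of r, let T2 be any T1-minimum spanning tree of b (where the T1-weight of a pair is 0 if it is an edge of T1 and the Euclidean distance otherwise), and let T3 be any (T1 ∪ T2)-minimum spanning tree of r (weights 0 on edges of T1 or T2, Euclidean distance otherwise). Then every edge of T3 is an edge of T1 or of T2; in particular, the third minimum-spanning-tree computation adds no new edge, and no new edge with both endpoints in r ∩ b, so the support T2 ∪ T3 is contained in the support T1 ∪ T2. -/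
noncomputable section

/-- For `r ∪ b = P` with all pairwise distances of `P` distinct, let
`T1` be the EMST of `r`, `T2` a `T1`-minimum spanning tree of `b`, and `T3` a
`(T1 ∪ T2)`-minimum spanning tree of `r`. Then every edge of `T3` is an edge of `T1` or
of `T2`; in particular no new edge (and no new edge with both endpoints in `r ∩ b`) is
added, and the support `T2 ∪ T3` is contained in the support `T1 ∪ T2`. -/
theorem mst_iteration_stabilizes (P : Finset Pt) (hdist : DistinctDistances P)
    (r b : Finset Pt) (hr : r ⊆ P) (hb : b ⊆ P) (hcover : r ∪ b = P)
    (T1 T2 T3 : Finset (Sym2 Pt))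
    (hT1 : IsEMST r T1)
    (hT2 : IsFMST T1 b T2)
    (hT3 : IsFMST (T1 ∪ T2) r T3) :
    (∀ e ∈ T3, e ∈ T1 ∨ e ∈ T2) ∧
    (∀ e ∈ T3, (∀ p ∈ e, p ∈ r ∩ b) → e ∈ T1 ∪ T2) ∧
    T2 ∪ T3 ⊆ T1 ∪ T2 := by
  have key : ∀ e ∈ T3, e ∈ T1 ∪ T2 := by
    have nonneg : ∀ e : Sym2 Pt, 0 ≤ edgeLen e := by
      intro e
      induction e using Sym2.ind with
      | _ u v => exact (dist_nonneg : 0 ≤ dist u v)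
    have h0 : fWeight (T1 ∪ T2) T1 = 0 := by
      unfold fWeight
      refine Finset.sum_eq_zero fun e he => ?_
      rw [if_pos (Finset.mem_union_left _ he)]
    have hle : fWeight (T1 ∪ T2) T3 ≤ 0 := h0 ▸ hT3.2.2 T1 hT1.1 hT1.2.1
    have hterm : ∀ e ∈ T3, 0 ≤ (if e ∈ T1 ∪ T2 then (0 : ℝ) else edgeLen e) := by
      intro e _
      split_ifs
      · exact le_rfl
      · exact nonneg e
    have hz : fWeight (T1 ∪ T2) T3 = 0 := le_antisymm hle (Finset.sum_nonneg hterm)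
    intro e he
    by_contra hne
    have h1 := (Finset.sum_eq_zero_iff_of_nonneg hterm).1 hz e he
    rw [if_neg hne] at h1
    have hd := (hT3.1 e he).1
    revert h1 hd
    induction e using Sym2.ind with
    | _ u v =>
      intro h1 hd
      exact hd (Sym2.mk_isDiag_iff.2 (dist_eq_zero.1 (show dist u v = 0 from h1)))
  refine ⟨fun e he => Finset.mem_union.1 (key e he), fun e he _ => key e he, ?_⟩
  exact Finset.union_subset Finset.subset_union_right key
end
end

section
/- Let H = (V,S) be a spatial hypergraph with |S| = k hyperedges, and for each hyperedge s ∈ S let T_s be a Euclidean minimum spanning tree of s. Then the graph G on V whose edge set is the union of the edge sets of the trees T_s (s ∈ S) is a support of H, and for every support G* of H the total length of G is at most k times the total length of G*. -/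
noncomputable section

/-- A connected induced subgraph contains a spanning tree, so it is at least as long as an EMST. -/
lemma IsEMST.le_of_connected {s : Finset Pt} {T G : Finset (Sym2 Pt)} (hT : IsEMST s T)
    (hG : InducedConnected G s) : graphLength T ≤ graphLength G := by
  classical
  obtain ⟨R, hR, hRt⟩ := SimpleGraph.Connected.exists_isTree_le hG
  let F : Finset (Sym2 Pt) := G.filter (fun e => ∃ a b : (↑s : Set Pt), R.Adj a b ∧ e = s(↑a, ↑b))
  have hFG : F ⊆ G := Finset.filter_subset _ _
  have hind : (SimpleGraph.fromEdgeSet (↑F : Set (Sym2 Pt))).induce (↑s : Set Pt) = R := by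
    ext a b
    simp only [SimpleGraph.comap_adj, SimpleGraph.fromEdgeSet_adj, Finset.mem_coe,
      Function.Embedding.subtype_apply, F, Finset.mem_filter]
    constructor
    · rintro ⟨⟨-, c, d, hcd, he⟩, -⟩
      rw [Sym2.eq_iff] at he
      rcases he with ⟨h1, h2⟩ | ⟨h1, h2⟩
      · rw [Subtype.ext h1, Subtype.ext h2]; exact hcd
      · rw [Subtype.ext h1, Subtype.ext h2]; exact hcd.symm
    · intro h
      have h2 := hR h
      simp only [SimpleGraph.comap_adj, SimpleGraph.fromEdgeSet_adj, Finset.mem_coe,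
        Function.Embedding.subtype_apply] at h2
      exact ⟨⟨h2.1, a, b, h, rfl⟩, h2.2⟩
  have hFe : EdgesOn s F := by
    intro e he
    obtain ⟨-, a, b, hab, rfl⟩ := Finset.mem_filter.1 he
    refine ⟨fun h => hab.ne (Subtype.ext (Sym2.mk_isDiag_iff.1 h)), fun p hp => ?_⟩
    rcases Sym2.mem_iff.1 hp with rfl | rfl
    · exact a.2
    · exact b.2
  have hFt : IsTreeOn s F := by
    unfold IsTreeOn
    rw [hind]
    exact hRt
  exact (hT.2.2 F hFe hFt).trans
    (Finset.sum_le_sum_of_subset_of_nonneg hFG fun e _ _ => edgeLen_nonneg e)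

lemma graphLength_biUnion_le (S : Finset (Finset Pt)) (T : Finset Pt → Finset (Sym2 Pt)) :
    graphLength (S.biUnion T) ≤ ∑ s ∈ S, graphLength (T s) := by
  induction S using Finset.induction_on with
  | empty => simp [graphLength]
  | insert a S ha ih =>
    rw [Finset.biUnion_insert, Finset.sum_insert ha]
    have h := Finset.sum_union_inter (s₁ := T a) (s₂ := S.biUnion T) (f := edgeLen)
    have h2 : 0 ≤ ∑ e ∈ T a ∩ S.biUnion T, edgeLen e :=
      Finset.sum_nonneg fun e _ => edgeLen_nonneg e
    unfold graphLength at *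
    linarith

/-- The union of Euclidean minimum spanning trees of the hyperedges is
a support, and its total length is at most `k` times the total length of any support,
where `k` is the number of hyperedges. -/
theorem union_of_emsts_is_k_approximation (V : Finset Pt) (S : Finset (Finset Pt))
    (k : ℕ) (hk : S.card = k)
    (hs : ∀ s ∈ S, s.Nonempty ∧ s ⊆ V)
    (hcover : ∀ v ∈ V, ∃ s ∈ S, v ∈ s)
    (T : Finset Pt → Finset (Sym2 Pt)) (hT : ∀ s ∈ S, IsEMST s (T s)) :
    (EdgesOn V (S.biUnion T) ∧ ∀ s ∈ S, InducedConnected (S.biUnion T) s) ∧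
    ∀ G : Finset (Sym2 Pt), EdgesOn V G → (∀ s ∈ S, InducedConnected G s) →
      graphLength (S.biUnion T) ≤ (k : ℝ) * graphLength G := by
  refine ⟨⟨?_, ?_⟩, ?_⟩
  · intro e he
    obtain ⟨s, hsS, hes⟩ := Finset.mem_biUnion.1 he
    have h := (hT s hsS).1 e hes
    exact ⟨h.1, fun p hp => (hs s hsS).2 (h.2 p hp)⟩
  · intro s hsS
    have h : ((SimpleGraph.fromEdgeSet (↑(T s) : Set (Sym2 Pt))).induce
      (↑s : Set Pt)).Connected := (hT s hsS).2.1.connected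
    refine h.mono ?_
    exact SimpleGraph.comap_monotone _ (SimpleGraph.fromEdgeSet_mono
      (Finset.coe_subset.2 (Finset.subset_biUnion_of_mem T hsS)))
  · intro G _ hG
    calc graphLength (S.biUnion T) ≤ ∑ s ∈ S, graphLength (T s) := graphLength_biUnion_le S T
      _ ≤ ∑ _s ∈ S, graphLength G :=
        Finset.sum_le_sum fun s hsS => (hT s hsS).le_of_connected (hG s hsS)
      _ = (k : ℝ) * graphLength G := by rw [Finset.sum_const, hk, nsmul_eq_mul]
end
end

section
/- Let G be a simple graph on a finite vertex set, let s be a finite nonempty subset of the vertices, and fix a sink σ ∈ s. Then the subgraph of G induced by s is connected if and only if there exists a function f : s × s → ℕ satisfying: (0) f(u,v) = 0 whenever u = v or {u,v} is not an edge of G, and f(u,v) ≤ |s| − 1 for all u,v; (a) Σ_{u ∈ s \ {σ}} f(u,σ) = |s| − 1; (b) f(σ,v) = 0 for all v ∈ s; (c) for every u ∈ s \ {σ}, Σ_{v ∈ s \ {u}} ( f(u,v) − f(v,u) ) = 1. -/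
theorem exists_path_flow {α : Type*} [DecidableEq α]
    (G : SimpleGraph α) (s : Finset α) (σ : α) (d : α → ℕ)
    (hd : ∀ w ∈ s, w ≠ σ → ∃ v ∈ s, G.Adj w v ∧ d v + 1 = d w) (n : ℕ) :
    ∀ w ∈ s, d w = n → ∃ g : α → α → ℕ, (∀ u v, g u v ≤ 1) ∧
      (∀ u v, g u v ≠ 0 → G.Adj u v ∧ d v < d u ∧ d u ≤ n) ∧
      ∀ u ∈ s, ∑ v ∈ s, ((g u v : ℤ) - (g v u : ℤ)) =
        (if u = w then 1 else 0) - (if u = σ then 1 else 0) := by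
  induction n with
  | zero =>
    intro w hw h0
    have : w = σ := by
      by_contra h
      obtain ⟨v, _, _, h2⟩ := hd w hw h
      omega
    subst this
    exact ⟨fun _ _ => 0, by simp, by simp, by simp⟩
  | succ n ih =>
    intro w hw hn
    by_cases h : w = σ
    · subst h
      exact ⟨fun _ _ => 0, by simp, by simp, by simp⟩
    obtain ⟨p, hp, hadj, hdp⟩ := hd w hw h
    obtain ⟨g, g1, g2, g3⟩ := ih p hp (by omega)
    have hz : g w p = 0 := by
      by_contra hne
      have := (g2 w p hne).2.2
      omega
    refine ⟨fun u v => g u v + if u = w ∧ v = p then 1 else 0, ?_, ?_, ?_⟩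
    · intro u v
      have := g1 u v
      dsimp only
      split_ifs with hc
      · rw [hc.1, hc.2, hz]
      · simpa using this
    · intro u v hne
      dsimp only at hne
      split_ifs at hne with hc
      · obtain ⟨rfl, rfl⟩ := hc
        exact ⟨hadj, by omega, by omega⟩
      · have := g2 u v (by simpa using hne)
        exact ⟨this.1, this.2.1, by omega⟩
    · intro u hu
      have e1 : ∑ v ∈ s, (if u = w ∧ v = p then (1 : ℤ) else 0) = if u = w then 1 else 0 := by
        by_cases huw : u = w <;> simp [huw, hp]
      have e2 : ∑ v ∈ s, (if v = w ∧ u = p then (1 : ℤ) else 0) = if u = p then 1 else 0 := by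
        by_cases huw : u = p <;> simp [huw, hw]
      have := g3 u hu
      rw [Finset.sum_sub_distrib] at this ⊢
      push_cast
      rw [Finset.sum_add_distrib, Finset.sum_add_distrib, e1, e2]
      linarith

/-- For a simple graph `G` on a finite vertex set, a finite nonempty
vertex subset `s` and a sink `σ ∈ s`, the subgraph induced by `s` is connected iff there
is an integral flow `f` on `s × s` in which flow is sent only along edges of `G`, each
flow value is at most `|s| - 1`, the sink receives `|s| - 1` units and sends none, and
every other vertex of `s` has net outflow exactly one. -/
theorem induced_connected_iff_flow {α : Type*} [Fintype α] [DecidableEq α]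
    (G : SimpleGraph α) (s : Finset α) (σ : α) (hσ : σ ∈ s) :
    (G.induce (↑s : Set α)).Connected ↔
      ∃ f : α → α → ℕ,
        -- (0) flow only along edges of `G`, and each value at most `|s| - 1`:
        (∀ u ∈ s, ∀ v ∈ s, (u = v ∨ ¬ G.Adj u v) → f u v = 0) ∧
        (∀ u ∈ s, ∀ v ∈ s, f u v ≤ s.card - 1) ∧
        -- (a) the sink `σ` receives exactly `|s| - 1` units of flow:
        (∑ u ∈ s.erase σ, f u σ) = s.card - 1 ∧
        -- (b) the sink `σ` sends out no flow:
        (∀ v ∈ s, f σ v = 0) ∧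
        -- (c) every other vertex of `s` sends out one unit more than it receives:
        (∀ u ∈ s.erase σ, (∑ v ∈ s.erase u, ((f u v : ℤ) - (f v u : ℤ))) = 1) := by
  constructor
  · intro hc
    classical
    let H := G.induce (↑s : Set α)
    let d : α → ℕ := fun v => if h : v ∈ s then H.dist ⟨v, h⟩ ⟨σ, hσ⟩ else 0
    have hdσ : d σ = 0 := by simp [d, hσ]
    have hd : ∀ w ∈ s, w ≠ σ → ∃ v ∈ s, G.Adj w v ∧ d v + 1 = d w := by
      intro w hw hne
      obtain ⟨q, hq⟩ := hc.exists_walk_length_eq_dist ⟨w, hw⟩ ⟨σ, hσ⟩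
      cases q with
      | nil => exact absurd rfl hne
      | @cons _ v _ hadj q =>
        obtain ⟨v, hv⟩ := v
        have hv' : v ∈ s := hv
        refine ⟨v, hv', hadj, ?_⟩
        have h1 : H.dist ⟨v, hv⟩ ⟨σ, hσ⟩ ≤ q.length := SimpleGraph.dist_le q
        obtain ⟨r, hr⟩ := hc.exists_walk_length_eq_dist ⟨v, hv⟩ ⟨σ, hσ⟩
        have h2 := SimpleGraph.dist_le (SimpleGraph.Walk.cons hadj r)
        simp only [SimpleGraph.Walk.length_cons] at hq h2
        simp only [d, hv', hw, dif_pos]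
        change H.dist _ _ + 1 = H.dist _ _
        change _ = H.dist _ _ at hq
        change _ = H.dist _ _ at hr
        change H.dist _ _ ≤ _ at h2
        omega
    have key := fun w : s => exists_path_flow G s σ d hd (d w) w w.2 rfl
    choose g g1 g2 g3 using key
    let F : α → α → α → ℕ := fun w u v => if h : w ∈ s then g ⟨w, h⟩ u v else 0
    have F1 : ∀ w u v, F w u v ≤ 1 := by
      intro w u v
      by_cases h : w ∈ s
      · simpa [F, h] using g1 ⟨w, h⟩ u v
      · simp [F, h]
    have F2 : ∀ w u v, F w u v ≠ 0 → G.Adj u v ∧ d v < d u := by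
      intro w u v hne
      by_cases h : w ∈ s
      · have := g2 ⟨w, h⟩ u v (by simpa [F, h] using hne)
        exact ⟨this.1, this.2.1⟩
      · simp [F, h] at hne
    have F3 : ∀ w ∈ s, ∀ u ∈ s, ∑ v ∈ s, ((F w u v : ℤ) - (F w v u : ℤ)) =
        (if u = w then 1 else 0) - (if u = σ then 1 else 0) := by
      intro w h u hu
      simpa [F, h] using g3 ⟨w, h⟩ u hu
    have hnet : ∀ u ∈ s, ∑ v ∈ s, (((∑ w ∈ s.erase σ, F w u v : ℕ) : ℤ)
        - ((∑ w ∈ s.erase σ, F w v u : ℕ) : ℤ)) =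
        ∑ w ∈ s.erase σ, ((if u = w then 1 else 0) - (if u = σ then 1 else 0)) := by
      intro u hu
      push_cast
      simp_rw [← Finset.sum_sub_distrib]
      rw [Finset.sum_comm]
      exact Finset.sum_congr rfl fun w hw => F3 w (Finset.mem_of_mem_erase hw) u hu
    have hσ0 : ∀ w v, F w σ v = 0 := by
      intro w v
      by_contra hne
      have := (F2 w σ v hne).2
      omega
    refine ⟨fun u v => ∑ w ∈ s.erase σ, F w u v, ?_, ?_, ?_, ?_, ?_⟩
    · intro u _ v _ h
      refine Finset.sum_eq_zero fun w _ => ?_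
      by_contra hne
      have := (F2 w u v hne).1
      rcases h with rfl | h
      · exact G.loopless.irrefl _ this
      · exact h this
    · intro u _ v _
      rw [← Finset.card_erase_of_mem hσ]
      calc _ ≤ ∑ w ∈ s.erase σ, 1 := Finset.sum_le_sum fun w _ => F1 w u v
        _ = _ := by simp
    · rw [← Finset.card_erase_of_mem hσ]
      have h1 := hnet σ hσ
      have h2 : ∑ w ∈ s.erase σ, (((if σ = w then 1 else 0) - (if σ = σ then 1 else 0)) : ℤ)
          = ∑ w ∈ s.erase σ, (-1) := by
        refine Finset.sum_congr rfl fun w hw => ?_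
        rw [if_neg (Finset.ne_of_mem_erase hw).symm]
        simp
      rw [h2, ← Finset.add_sum_erase _ _ hσ] at h1
      simp only [hσ0, Finset.sum_const_zero, Nat.cast_zero, zero_sub, sub_zero, zero_add,
        Finset.sum_neg_distrib, neg_zero, Finset.sum_const, smul_eq_mul, nsmul_eq_mul,
        mul_one, mul_neg, neg_inj] at h1
      exact_mod_cast h1
    · intro v _
      simp [hσ0]
    · intro u hu
      have hus := Finset.mem_of_mem_erase hu
      have h1 := hnet u hus
      rw [← Finset.add_sum_erase _ _ hus, sub_self, zero_add] at h1
      rw [h1]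
      simp [Finset.ne_of_mem_erase hu, hus]
  · rintro ⟨f, f0, -, -, -, fc⟩
    classical
    let H := G.induce (↑s : Set α)
    let R : α → Prop := fun v => ∃ h : v ∈ s, H.Reachable ⟨v, h⟩ ⟨σ, hσ⟩
    have hR : ∀ u ∈ s, ∀ v ∈ s, G.Adj u v → R u → R v := by
      rintro u hu v hv hadj ⟨_, h⟩
      have : H.Adj ⟨v, hv⟩ ⟨u, hu⟩ := hadj.symm
      exact ⟨hv, this.reachable.trans h⟩
    let C := s.filter fun v => ¬ R v
    have hCs : C ⊆ s := Finset.filter_subset _ _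
    have hRσ : R σ := ⟨hσ, SimpleGraph.Reachable.refl _⟩
    have h1 : ∑ u ∈ C, ∑ v ∈ C, ((f u v : ℤ) - (f v u : ℤ)) = C.card := by
      rw [Finset.card_eq_sum_ones, Nat.cast_sum]
      refine Finset.sum_congr rfl fun u hu => ?_
      obtain ⟨hus, hur⟩ := Finset.mem_filter.1 hu
      have hne : u ≠ σ := fun h => hur (h ▸ hRσ)
      have h2 := fc u (Finset.mem_erase.2 ⟨hne, hus⟩)
      rw [Nat.cast_one, ← h2]
      have h3 : ∑ v ∈ s.erase u, ((f u v : ℤ) - (f v u : ℤ))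
          = ∑ v ∈ s, ((f u v : ℤ) - (f v u : ℤ)) := by
        rw [← Finset.add_sum_erase s _ hus, sub_self, zero_add]
      rw [h3]
      refine Finset.sum_subset hCs fun v hv hvC => ?_
      have hvr : R v := by
        by_contra h
        exact hvC (Finset.mem_filter.2 ⟨hv, h⟩)
      have hna : ¬ G.Adj v u := fun h => hur (hR v hv u hus h hvr)
      rw [f0 u hus v hv (Or.inr fun h => hna h.symm), f0 v hv u hus (Or.inr hna)]
      simp
    have h0 : ∑ u ∈ C, ∑ v ∈ C, ((f u v : ℤ) - (f v u : ℤ)) = 0 := by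
      simp_rw [Finset.sum_sub_distrib]
      rw [Finset.sum_comm, sub_self]
    have hC : C = ∅ := by
      rw [← Finset.card_eq_zero]
      have := h1.symm.trans h0
      exact_mod_cast this
    have hall : ∀ x : (↑s : Set α), H.Reachable x ⟨σ, hσ⟩ := by
      rintro ⟨v, hv⟩
      by_contra h
      have : v ∈ C := Finset.mem_filter.2 ⟨hv, fun ⟨_, h'⟩ => h h'⟩
      simp [hC] at this
    haveI : Nonempty (↑s : Set α) := ⟨⟨σ, hσ⟩⟩
    exact ⟨fun x y => (hall x).trans (hall y).symm⟩
end
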